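/- arXiv:2310.14742 — 2 statements merged into one kernel-verified Lean document; each statement's English description precedes it below -/
import Mathlib

section
/- Let d ≥ 3 and let D ⊂ ℝ^d be a hyperbolic convex domain. Let p, q ∈ D be distinct points, let L be the real line containing p and q, and let ξ ∈ L ∖ D. Then (1/2)|log(‖ξ−p‖/‖ξ−q‖)| ≤ ρ_D(p,q). -/
open scoped RealInnerProductSpace ENNReal
open Metric Set Filter

noncomputable section

/-- Euclidean space `ℝ^d`. -/
abbrev Euc (d : ℕ) := EuclideanSpace ℝ (Fin d)

/-- The open unit disk in `ℝ²`. -/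
def unitDisk : Set (Euc 2) := Metric.ball 0 1

/-- Partial derivative of `f` at `z` in the `i`-th coordinate direction. -/
def pd {d : ℕ} (i : Fin 2) (f : Euc 2 → Euc d) (z : Euc 2) : Euc d :=
  fderiv ℝ f z (EuclideanSpace.single i 1)

/-- `f` is a conformal harmonic map on the unit disk: it is `C²`, its (vector)
Laplacian vanishes (equivalently, every component is harmonic), and at each point
its two partial derivatives are orthogonal and of equal norm. -/
def ConformalHarmonicOnDisk {d : ℕ} (f : Euc 2 → Euc d) : Prop :=
  ContDiffOn ℝ 2 f unitDisk ∧
  (∀ z ∈ unitDisk,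
    fderiv ℝ (pd 0 f) z (EuclideanSpace.single 0 1)
      + fderiv ℝ (pd 1 f) z (EuclideanSpace.single 1 1) = 0) ∧
  (∀ z ∈ unitDisk, ‖pd 0 f z‖ = ‖pd 1 f z‖ ∧ ⟪pd 0 f z, pd 1 f z⟫ = 0)

/-- The minimal (Forstnerič–Kalaj) metric of a domain `D ⊆ ℝ^d`:
`g_D(x,v) = inf {1/r : r > 0, f ∈ CH(𝔻, D), f 0 = x, f_x 0 = r • v}`. -/
def minMetric {d : ℕ} (D : Set (Euc d)) (x v : Euc d) : ℝ :=
  sInf {c : ℝ | ∃ r : ℝ, 0 < r ∧ c = 1 / r ∧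
    ∃ f : Euc 2 → Euc d, ConformalHarmonicOnDisk f ∧ (∀ z ∈ unitDisk, f z ∈ D) ∧
      f 0 = x ∧ pd 0 f 0 = r • v}

/-- `γ` is a piecewise `C¹` curve on `[a, b]`. -/
def PiecewiseC1On {d : ℕ} (γ : ℝ → Euc d) (a b : ℝ) : Prop :=
  ContinuousOn γ (Set.Icc a b) ∧
  ∃ (n : ℕ) (t : Fin (n + 2) → ℝ), Monotone t ∧ t 0 = a ∧ t (Fin.last (n + 1)) = b ∧
    ∀ i : Fin (n + 1), ContDiffOn ℝ 1 γ (Set.Icc (t i.castSucc) (t i.succ))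

/-- The minimal pseudodistance `ρ_D`: infimum of minimal lengths of piecewise `C¹`
curves in `D` joining `x` to `y`. -/
def minDist {d : ℕ} (D : Set (Euc d)) (x y : Euc d) : ℝ :=
  sInf {L : ℝ | ∃ γ : ℝ → Euc d, PiecewiseC1On γ 0 1 ∧
    (∀ t ∈ Set.Icc (0:ℝ) 1, γ t ∈ D) ∧ γ 0 = x ∧ γ 1 = y ∧
    L = ∫ t in (0:ℝ)..(1:ℝ), minMetric D (γ t) (deriv γ t)}

/-- The Gromov product `(x|y)_o` with respect to the minimal pseudodistance of `D`. -/
def gromovProd {d : ℕ} (D : Set (Euc d)) (o x y : Euc d) : ℝ :=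
  (minDist D x o + minDist D y o - minDist D x y) / 2

/-- `D` is hyperbolic: the minimal pseudodistance is a genuine distance. -/
def MinHyperbolic {d : ℕ} (D : Set (Euc d)) : Prop :=
  ∀ x ∈ D, ∀ y ∈ D, x ≠ y → 0 < minDist D x y

/-- The Hessian quadratic form of `u` at `x` in direction `v`. -/
def hessQ {d : ℕ} (u : Euc d → ℝ) (x v : Euc d) : ℝ :=
  fderiv ℝ (fun y => fderiv ℝ u y v) x v

/-- `D` is a bounded domain with `C²` boundary, described by a `C²` defining
function `u` on a neighborhood `U` of `∂D` with nonvanishing differential. -/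
def IsC2BoundedDomain {d : ℕ} (D : Set (Euc d)) : Prop :=
  IsOpen D ∧ IsConnected D ∧ Bornology.IsBounded D ∧
  ∃ (U : Set (Euc d)) (u : Euc d → ℝ), IsOpen U ∧ frontier D ⊆ U ∧ ContDiffOn ℝ 2 u U ∧
    D ∩ U = {x | x ∈ U ∧ u x < 0} ∧ frontier D = {x | x ∈ U ∧ u x = 0} ∧
    ∀ x ∈ frontier D, fderiv ℝ u x ≠ 0

/-- `D` is a bounded strongly minimally convex domain: it has a `C²` defining function
which is strongly minimally plurisubharmonic near `∂D`, i.e. the trace of its Hessian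
on every 2-plane (spanned by an orthonormal pair `v, w`) is strictly positive. -/
def IsStronglyMinimallyConvex {d : ℕ} (D : Set (Euc d)) : Prop :=
  IsOpen D ∧ IsConnected D ∧ Bornology.IsBounded D ∧
  ∃ (U : Set (Euc d)) (u : Euc d → ℝ), IsOpen U ∧ frontier D ⊆ U ∧ ContDiffOn ℝ 2 u U ∧
    D ∩ U = {x | x ∈ U ∧ u x < 0} ∧ frontier D = {x | x ∈ U ∧ u x = 0} ∧
    (∀ x ∈ frontier D, fderiv ℝ u x ≠ 0) ∧
    (∀ x ∈ U, ∀ v w : Euc d, ‖v‖ = 1 → ‖w‖ = 1 → ⟪v, w⟫ = 0 →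
      0 < hessQ u x v + hessQ u x w)

/-- `D` is a bounded strongly convex domain: convex, with a `C²` defining function whose
Hessian is positive definite on the tangent space at every boundary point
(equivalently, all principal curvatures of `∂D` w.r.t. the inner normal are positive). -/
def IsStronglyConvexDomain {d : ℕ} (D : Set (Euc d)) : Prop :=
  IsOpen D ∧ IsConnected D ∧ Bornology.IsBounded D ∧ Convex ℝ D ∧
  ∃ (U : Set (Euc d)) (u : Euc d → ℝ), IsOpen U ∧ frontier D ⊆ U ∧ ContDiffOn ℝ 2 u U ∧
    D ∩ U = {x | x ∈ U ∧ u x < 0} ∧ frontier D = {x | x ∈ U ∧ u x = 0} ∧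
    (∀ x ∈ frontier D, fderiv ℝ u x ≠ 0) ∧
    (∀ ξ ∈ frontier D, ∀ w : Euc d, w ≠ 0 → fderiv ℝ u ξ w = 0 → 0 < hessQ u ξ w)

/-- For `x ∈ D` with nearest boundary point `p`, the outer unit normal direction
`n_{π(x)} = (p - x)/‖p - x‖`. -/
def nvec {d : ℕ} (x p : Euc d) : Euc d := ‖p - x‖⁻¹ • (p - x)

/-- Normal component of `v` at `x` with nearest boundary point `p`. -/
def vN {d : ℕ} (x p v : Euc d) : Euc d := ⟪v, nvec x p⟫ • nvec x p

/-- Tangential component of `v` at `x` with nearest boundary point `p`. -/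
def vT {d : ℕ} (x p v : Euc d) : Euc d := v - vN x p v

/-- The intrinsic distance `H` on the boundary `∂D`: infimum of Euclidean lengths of
piecewise `C¹` curves in `∂D` joining two boundary points. -/
def bdist {d : ℕ} (D : Set (Euc d)) (ξ η : Euc d) : ℝ :=
  sInf {L : ℝ | ∃ α : ℝ → Euc d, PiecewiseC1On α 0 1 ∧
    (∀ t ∈ Set.Icc (0:ℝ) 1, α t ∈ frontier D) ∧ α 0 = ξ ∧ α 1 = η ∧
    L = ∫ t in (0:ℝ)..(1:ℝ), ‖deriv α t‖}

/-- `h(x) = δ_D(x)^{1/2}`. -/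
def hfun {d : ℕ} (D : Set (Euc d)) (x : Euc d) : ℝ :=
  Real.sqrt (Metric.infDist x (frontier D))

/-- The length of a curve with respect to the boundary Finsler metric
`F(x,v) = ‖v_N‖/(2 δ_D(x)) + ‖v_T‖/δ_D(x)^{1/2}`. -/
def Flen {d : ℕ} (D : Set (Euc d)) (π : Euc d → Euc d) (γ : ℝ → Euc d) : ℝ :=
  ∫ t in (0:ℝ)..(1:ℝ),
    (‖vN (γ t) (π (γ t)) (deriv γ t)‖ / (2 * Metric.infDist (γ t) (frontier D))
      + ‖vT (γ t) (π (γ t)) (deriv γ t)‖ / Real.sqrt (Metric.infDist (γ t) (frontier D)))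

/-- The filling Finsler metric `F`: the boundary Finsler metric on
`N = {δ_D ≤ ε}` and `c‖v‖` elsewhere. -/
def Fmet {d : ℕ} (D : Set (Euc d)) (π : Euc d → Euc d) (ε c : ℝ) (x v : Euc d) : ℝ :=
  if Metric.infDist x (frontier D) ≤ ε then
    ‖vN x (π x) v‖ / (2 * Metric.infDist x (frontier D))
      + ‖vT x (π x) v‖ / Real.sqrt (Metric.infDist x (frontier D))
  else c * ‖v‖

/-- The intrinsic distance `d_F` associated to the filling Finsler metric `F`. -/
def dF {d : ℕ} (D : Set (Euc d)) (π : Euc d → Euc d) (ε c : ℝ) (x y : Euc d) : ℝ :=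
  sInf {L : ℝ | ∃ γ : ℝ → Euc d, PiecewiseC1On γ 0 1 ∧
    (∀ t ∈ Set.Icc (0:ℝ) 1, γ t ∈ D) ∧ γ 0 = x ∧ γ 1 = y ∧
    L = ∫ t in (0:ℝ)..(1:ℝ), Fmet D π ε c (γ t) (deriv γ t)}

/-- The hyperbolic filling distance
`d_H(x,y) = 2 log((H(π x, π y) + h(x) ∨ h(y)) / √(h(x) h(y)))`. -/
def dH {d : ℕ} (D : Set (Euc d)) (π : Euc d → Euc d) (x y : Euc d) : ℝ :=
  2 * Real.log ((bdist D (π x) (π y) + max (hfun D x) (hfun D y)) /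
    Real.sqrt (hfun D x * hfun D y))

/-- `δ̂_D(x,v)`: the supremum over 2-dimensional linear subspaces `Λ ∋ v` of the
distance (in `ℝ≥0∞`, so `∞` if `x + Λ ⊆ D`) from `x` to `(x + Λ) \ D`. -/
def deltaHat {d : ℕ} (D : Set (Euc d)) (x v : Euc d) : ℝ≥0∞ :=
  ⨆ (Λ : Submodule ℝ (Euc d)) (_ : Module.finrank ℝ Λ = 2) (_ : v ∈ Λ),
    ⨅ (y : Euc d) (_ : y - x ∈ Λ ∧ y ∉ D), edist x y

/-- The positive parameter at which the ray `t ↦ x + t • v` exits the convex domain `D`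
(equal to `0`, by the `sInf ∅ = 0` convention, when the ray stays in `D`,
i.e. when the corresponding chord endpoint is the point at infinity). -/
def chordParam {d : ℕ} (D : Set (Euc d)) (x v : Euc d) : ℝ :=
  sInf {s : ℝ | 0 < s ∧ x + s • v ∉ D}

/-- The Hilbert Finsler metric `h_D(x,v) = (‖v‖/2)(1/‖x-a‖ + 1/‖x-b‖)` of a convex
domain, with the convention `1/‖x-∞‖ = 0` (here `‖x-b‖ = chordParam D x v • ‖v‖` and
`‖x-a‖ = chordParam D x (-v) • ‖v‖`, and division by zero is zero). -/
def hilbertFinsler {d : ℕ} (D : Set (Euc d)) (x v : Euc d) : ℝ :=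
  (1/2) * (1 / chordParam D x v + 1 / chordParam D x (-v))

/- The Hilbert distance of a convex domain: for `x ≠ y`,
`H_D(x,y) = ½ log((‖x-b‖ ‖y-a‖)/(‖x-a‖ ‖y-b‖))` where `a, x, y, b` are aligned on the
chord through `x, y`, with the convention that ratios involving the point at infinity
(detected by `chordParam = 0`) are equal to `1`. -/
open Classical in
def hilbertDist {d : ℕ} (D : Set (Euc d)) (x y : Euc d) : ℝ :=
  if x = y then 0 else
    (1/2) * Real.log
      ((if chordParam D x (y - x) = 0 then 1
        else chordParam D x (y - x) / (chordParam D x (y - x) - 1)) *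
       (if chordParam D x (x - y) = 0 then 1
        else (1 + chordParam D x (x - y)) / chordParam D x (x - y)))

/-!
Separate `ξ` from `D` by a continuous linear functional `l`, so that `l < c := l ξ` on `D`. Along a
conformal harmonic disk `f` in `D`, the function `c - l ∘ f` is positive and harmonic, and the sharp
gradient estimate for such functions at the centre of the disk gives
`|l v| / (2 (c - l x)) ≤ g_D(x, v)`. The left-hand side is the size of the derivative of
`½ log (c - l)` along `v`, so every curve in `D` from `p` to `q` has minimal length at least
`½ |log ((c - l p) / (c - l q))|`, and the ratio of the heights `c - l p` and `c - l q` is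
`‖ξ - p‖ / ‖ξ - q‖` because `ξ` lies on the line through `p` and `q`.

Since the Bochner integral of a non-integrable function is `0`, the length estimate also needs
`g_D(γ, γ')` to be integrable. It is, because `g_D` is upper semicontinuous on `D × ℝ^d`: shrinking
a competing disk slightly leaves room to carry it by a similarity to all nearby pairs `(x, v)`.
-/

section HarmonicComposition

open InnerProductSpace Laplacian

variable {E F G : Type*} [NormedAddCommGroup E] [InnerProductSpace ℝ E] [FiniteDimensional ℝ E]
  [NormedAddCommGroup F] [InnerProductSpace ℝ F] [FiniteDimensional ℝ F]
  [NormedAddCommGroup G] [NormedSpace ℝ G]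

theorem laplacian_comp_smul_linearIsometryEquiv (f : F → G) {r : ℝ} (hr : r ≠ 0)
    (e : E ≃ₗᵢ[ℝ] F) (x : E) :
    Δ (fun y => f (r • e y)) x = r ^ 2 • Δ f (r • e x) := by
  let A : E ≃L[ℝ] F :=
    e.toContinuousLinearEquiv.trans (ContinuousLinearEquiv.smulLeft (Units.mk0 r hr))
  have hA : ∀ y, A y = r • e y := fun y => rfl
  have hcomp := A.iteratedFDerivWithin_comp_right f uniqueDiffOn_univ (mem_univ (A x)) 2
  rw [preimage_univ, iteratedFDerivWithin_univ, iteratedFDerivWithin_univ] at hcomp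
  change Δ (f ∘ A) x = _
  let b := stdOrthonormalBasis ℝ E
  rw [laplacian_eq_iteratedFDeriv_orthonormalBasis _ b,
    laplacian_eq_iteratedFDeriv_orthonormalBasis _ (b.map e), Finset.smul_sum]
  refine Finset.sum_congr rfl fun i _ => ?_
  rw [hcomp, ContinuousMultilinearMap.compContinuousLinearMap_apply]
  have hpair : (fun j => (A : E →L[ℝ] F) (![b i, b i] j)) =
      fun j => r • ![e (b i), e (b i)] j := by
    funext j
    fin_cases j <;> simp [hA]
  rw [hpair, ContinuousMultilinearMap.map_smul_univ]
  simp [hA]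

theorem harmonicOnNhd_comp_smul_linearIsometryEquiv {f : F → G} {s : Set F}
    (hf : HarmonicOnNhd f s) {r : ℝ} (hr : r ≠ 0) (e : E ≃ₗᵢ[ℝ] F) :
    HarmonicOnNhd (fun y => f (r • e y)) ((fun y => r • e y) ⁻¹' s) := by
  intro x hx
  have hcont : ContDiff ℝ 2 fun y => r • e y := e.contDiff.const_smul r
  refine ⟨(hf _ hx).1.comp x hcont.contDiffAt, ?_⟩
  filter_upwards [hcont.continuous.continuousAt.eventually (hf _ hx).2] with y hy
  rw [laplacian_comp_smul_linearIsometryEquiv f hr, hy]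
  simp

end HarmonicComposition

section ConformalHarmonicMaps

open InnerProductSpace Laplacian

variable {d d' : ℕ} {f : Euc 2 → Euc d}

theorem isOpen_unitDisk : IsOpen unitDisk := isOpen_ball

theorem zero_mem_unitDisk : (0 : Euc 2) ∈ unitDisk := mem_ball_self one_pos

theorem laplacian_eq_fderiv_pd {z : Euc 2} (hf : ContDiffAt ℝ 2 f z) :
    Δ f z = fderiv ℝ (pd 0 f) z (EuclideanSpace.single 0 1) +
      fderiv ℝ (pd 1 f) z (EuclideanSpace.single 1 1) := by
  have hdiff : DifferentiableAt ℝ (fderiv ℝ f) z :=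
    (hf.fderiv_right (m := 1) (by norm_num)).differentiableAt (by norm_num)
  have hpd : ∀ i (v : Euc 2), fderiv ℝ (pd i f) z v =
      fderiv ℝ (fderiv ℝ f) z v (EuclideanSpace.single i 1) := by
    intro i v
    unfold pd
    rw [fderiv_clm_apply hdiff (by fun_prop)]
    simp
  rw [laplacian_eq_iteratedFDeriv_orthonormalBasis f (EuclideanSpace.basisFun (Fin 2) ℝ)]
  simp [iteratedFDeriv_two_apply, hpd]

theorem conformalHarmonicOnDisk_iff :
    ConformalHarmonicOnDisk f ↔ HarmonicOnNhd f unitDisk ∧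
      ∀ z ∈ unitDisk, ‖pd 0 f z‖ = ‖pd 1 f z‖ ∧ ⟪pd 0 f z, pd 1 f z⟫ = 0 := by
  have contDiffAt (hf : ContDiffOn ℝ 2 f unitDisk) : ∀ z ∈ unitDisk, ContDiffAt ℝ 2 f z :=
    fun z hz => hf.contDiffAt (isOpen_unitDisk.mem_nhds hz)
  constructor
  · rintro ⟨hC2, hlap, hconf⟩
    refine ⟨fun z hz => ⟨contDiffAt hC2 z hz, ?_⟩, hconf⟩
    filter_upwards [isOpen_unitDisk.mem_nhds hz] with w hw
    rw [laplacian_eq_fderiv_pd (contDiffAt hC2 w hw), hlap w hw, Pi.zero_apply]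
  · rintro ⟨hharm, hconf⟩
    refine ⟨hharm.contDiffOn, fun z hz => ?_, hconf⟩
    rw [← laplacian_eq_fderiv_pd (hharm z hz).1]
    exact (hharm z hz).2.self_of_nhds

theorem ConformalHarmonicOnDisk.harmonicOnNhd (hf : ConformalHarmonicOnDisk f) :
    HarmonicOnNhd f unitDisk :=
  (conformalHarmonicOnDisk_iff.1 hf).1

theorem ConformalHarmonicOnDisk.differentiableAt (hf : ConformalHarmonicOnDisk f) {z : Euc 2}
    (hz : z ∈ unitDisk) : DifferentiableAt ℝ f z :=
  (hf.harmonicOnNhd z hz).1.differentiableAt (by norm_num)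

theorem conformalHarmonicOnDisk_id : ConformalHarmonicOnDisk (fun z : Euc 2 => z) := by
  have hpd : ∀ i, pd i (fun z : Euc 2 => z) = fun _ => EuclideanSpace.single i 1 := fun i => by
    ext1 z
    rw [pd, fderiv_fun_id, ContinuousLinearMap.id_apply]
  refine ⟨contDiffOn_id, ?_, ?_⟩ <;>
    simp [hpd, EuclideanSpace.inner_single_left]

theorem pd_const_add_smul_linearIsometry (T : Euc d →ₗᵢ[ℝ] Euc d') (c : ℝ) (b : Euc d')
    {z : Euc 2} (hf : DifferentiableAt ℝ f z) (i : Fin 2) :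
    pd i (fun w => b + c • T (f w)) z = c • T (pd i f z) := by
  have h : HasFDerivAt (fun w => b + c • T (f w))
      (c • T.toContinuousLinearMap.comp (fderiv ℝ f z)) z :=
    ((T.toContinuousLinearMap.hasFDerivAt.comp z hf.hasFDerivAt).const_smul c).const_add b
  rw [pd, h.fderiv]
  rfl

theorem ConformalHarmonicOnDisk.const_add_smul_linearIsometry (hf : ConformalHarmonicOnDisk f)
    (T : Euc d →ₗᵢ[ℝ] Euc d') (c : ℝ) (b : Euc d') :
    ConformalHarmonicOnDisk fun z => b + c • T (f z) := by
  refine conformalHarmonicOnDisk_iff.2 ⟨?_, fun z hz => ?_⟩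
  · exact (harmonicOnNhd_const b).add
      ((hf.harmonicOnNhd.comp_CLM T.toContinuousLinearMap).const_smul)
  · obtain ⟨hnorm, hinner⟩ := hf.2.2 z hz
    simp only [pd_const_add_smul_linearIsometry T c b (hf.differentiableAt hz), norm_smul,
      T.norm_map, T.inner_map_map, real_inner_smul_left, real_inner_smul_right, hnorm, hinner]
    simp

theorem pd_comp_smul (f : Euc 2 → Euc d) (ρ : ℝ) (z : Euc 2) (i : Fin 2) :
    pd i (fun w => f (ρ • w)) z = ρ • pd i f (ρ • z) := by
  rw [pd, fderiv_comp_smul]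
  rfl

theorem smul_mem_unitDisk {ρ : ℝ} (hρ0 : 0 ≤ ρ) (hρ1 : ρ ≤ 1) {z : Euc 2} (hz : z ∈ unitDisk) :
    ρ • z ∈ unitDisk :=
  (convex_ball 0 1).smul_mem_of_zero_mem zero_mem_unitDisk hz ⟨hρ0, hρ1⟩

theorem ConformalHarmonicOnDisk.comp_smul (hf : ConformalHarmonicOnDisk f) {ρ : ℝ} (hρ0 : 0 < ρ)
    (hρ1 : ρ ≤ 1) : ConformalHarmonicOnDisk fun z => f (ρ • z) := by
  refine conformalHarmonicOnDisk_iff.2 ⟨?_, fun z hz => ?_⟩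
  · exact (harmonicOnNhd_comp_smul_linearIsometryEquiv hf.harmonicOnNhd hρ0.ne'
      (.refl ℝ (Euc 2))).mono fun z hz => smul_mem_unitDisk hρ0.le hρ1 hz
  · obtain ⟨hnorm, hinner⟩ := hf.2.2 _ (smul_mem_unitDisk hρ0.le hρ1 hz)
    simp only [pd_comp_smul, norm_smul, real_inner_smul_left, real_inner_smul_right, hnorm, hinner]
    simp

end ConformalHarmonicMaps

section Harnack

open InnerProductSpace

theorem add_conj_ne_zero_of_re_pos {a w : ℂ} (ha : 0 < a.re) (hw : 0 < w.re) :
    w + (starRingEnd ℂ) a ≠ 0 := fun h => by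
  have hre := congrArg Complex.re h
  simp only [Complex.add_re, Complex.conj_re, Complex.zero_re] at hre
  linarith

theorem norm_div_add_conj_lt_one {a w : ℂ} (ha : 0 < a.re) (hw : 0 < w.re) :
    ‖(w - a) / (w + (starRingEnd ℂ) a)‖ < 1 := by
  rw [norm_div, div_lt_one (norm_pos_iff.2 (add_conj_ne_zero_of_re_pos ha hw)),
    ← sq_lt_sq₀ (norm_nonneg _) (norm_nonneg _), ← Complex.normSq_eq_norm_sq,
    ← Complex.normSq_eq_norm_sq, Complex.normSq_apply, Complex.normSq_apply]
  simp only [Complex.sub_re, Complex.sub_im, Complex.add_re, Complex.add_im, Complex.conj_re,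
    Complex.conj_im]
  nlinarith [mul_pos hw ha]

-- The Cayley transform `w ↦ (w - a) / (w + conj a)` carries the half-plane to the disk and
-- `a = F c` to `0`, which reduces the claim to the Schwarz lemma.
theorem norm_deriv_le_two_mul_re_div {F : ℂ → ℂ} {c : ℂ} {R : ℝ} (hR : 0 < R)
    (hF : DifferentiableOn ℂ F (ball c R)) (hpos : ∀ z ∈ ball c R, 0 < (F z).re) :
    ‖deriv F c‖ ≤ 2 * (F c).re / R := by
  have hc : c ∈ ball c R := mem_ball_self hR
  set a := F c with ha
  let G : ℂ → ℂ := fun z => (F z - a) / (F z + (starRingEnd ℂ) a)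
  have hne : ∀ z ∈ ball c R, F z + (starRingEnd ℂ) a ≠ 0 := fun z hz =>
    add_conj_ne_zero_of_re_pos (hpos c hc) (hpos z hz)
  have hG : DifferentiableOn ℂ G (ball c R) := (hF.sub_const a).div (hF.add_const _) hne
  have hGc : G c = 0 := by simp [G, ha]
  have hmaps : MapsTo G (ball c R) (closedBall (G c) 1) := fun z hz => by
    rw [hGc, mem_closedBall_zero_iff]
    exact (norm_div_add_conj_lt_one (hpos c hc) (hpos z hz)).le
  have hschwarz : ‖deriv G c‖ ≤ 1 / R := Complex.norm_deriv_le_div_of_mapsTo_ball hG hmaps hR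
  have hFc : HasDerivAt F (deriv F c) c :=
    (hF.differentiableAt (isOpen_ball.mem_nhds hc)).hasDerivAt
  have hsum : a + (starRingEnd ℂ) a = ((2 * a.re : ℝ) : ℂ) := Complex.add_conj a
  have ha0 : 0 < 2 * a.re := by linarith [hpos c hc]
  have hGderiv : HasDerivAt G (deriv F c / ((2 * a.re : ℝ) : ℂ)) c := by
    have hne' := hne c hc
    refine ((hFc.sub_const a).div (hFc.add_const _) hne').congr_deriv ?_
    rw [← ha, hsum] at hne' ⊢
    field_simp
    ring
  rw [hGderiv.deriv, norm_div, Complex.norm_real, Real.norm_of_nonneg ha0.le,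
    div_le_iff₀ ha0] at hschwarz
  exact hschwarz.trans_eq (by ring)

theorem norm_fderiv_le_two_mul_div_of_harmonicOnNhd_ball {h : ℂ → ℝ} {c : ℂ} {R : ℝ}
    (hR : 0 < R) (hh : HarmonicOnNhd h (ball c R)) (hpos : ∀ z ∈ ball c R, 0 < h z) :
    ‖fderiv ℝ h c‖ ≤ 2 * h c / R := by
  have hc : c ∈ ball c R := mem_ball_self hR
  obtain ⟨F, hF, hre⟩ := hh.exists_analyticOnNhd_ball_re_eq
  have hFc : HasDerivAt F (deriv F c) c := (hF c hc).differentiableAt.hasDerivAt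
  have hderiv : ∀ v, fderiv ℝ h c v = (v * deriv F c).re := fun v => by
    have heq : h =ᶠ[nhds c] Complex.reCLM ∘ F :=
      (hre.eventuallyEq_of_mem (isOpen_ball.mem_nhds hc)).symm
    rw [heq.fderiv_eq,
      (Complex.reCLM.hasFDerivAt.comp c (hFc.hasFDerivAt.restrictScalars ℝ)).fderiv]
    simp
  have hF_bound : ‖deriv F c‖ ≤ 2 * h c / R := by
    rw [← hre hc]
    exact norm_deriv_le_two_mul_re_div hR hF.differentiableOn fun z hz =>
      (hpos z hz).trans_eq (hre hz).symm
  have hhc : 0 < h c := hpos c hc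
  refine ContinuousLinearMap.opNorm_le_bound _ (by positivity) fun v => ?_
  calc ‖fderiv ℝ h c v‖ ≤ ‖v * deriv F c‖ := by
        rw [hderiv, Real.norm_eq_abs]
        exact Complex.abs_re_le_norm _
    _ ≤ 2 * h c / R * ‖v‖ := by
        rw [norm_mul, mul_comm]
        gcongr

theorem norm_fderiv_le_two_mul_of_harmonicOnNhd_unitDisk {h : Euc 2 → ℝ}
    (hh : HarmonicOnNhd h unitDisk) (hpos : ∀ z ∈ unitDisk, 0 < h z) :
    ‖fderiv ℝ h 0‖ ≤ 2 * h 0 := by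
  let e : ℂ ≃ₗᵢ[ℝ] Euc 2 := Complex.orthonormalBasisOneI.repr
  have he : ∀ z ∈ ball (0 : ℂ) 1, e z ∈ unitDisk := fun z hz => by
    rwa [unitDisk, mem_ball_zero_iff, e.norm_map, ← mem_ball_zero_iff]
  have hharm : HarmonicOnNhd (h ∘ e) (ball 0 1) := by
    have := harmonicOnNhd_comp_smul_linearIsometryEquiv hh one_ne_zero e
    simp only [one_smul] at this
    exact this.mono he
  have hbound := norm_fderiv_le_two_mul_div_of_harmonicOnNhd_ball one_pos hharm
    fun z hz => hpos _ (he z hz)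
  have hderiv : fderiv ℝ (h ∘ e) 0 = (fderiv ℝ h (e 0)).comp (e : ℂ →L[ℝ] Euc 2) :=
    e.toContinuousLinearEquiv.comp_right_fderiv
  rw [hderiv, ContinuousLinearMap.opNorm_comp_linearIsometryEquiv] at hbound
  simpa using hbound

theorem ConformalHarmonicOnDisk.abs_apply_pd_le {d : ℕ} {f : Euc 2 → Euc d}
    (hf : ConformalHarmonicOnDisk f) {l : Euc d →L[ℝ] ℝ} {c : ℝ}
    (hlt : ∀ z ∈ unitDisk, l (f z) < c) (i : Fin 2) :
    |l (pd i f 0)| ≤ 2 * (c - l (f 0)) := by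
  have hharm : HarmonicOnNhd (fun z => c - l (f z)) unitDisk :=
    (harmonicOnNhd_const c).sub (hf.harmonicOnNhd.comp_CLM l)
  have hderiv : HasFDerivAt (fun z => c - l (f z)) (-(l.comp (fderiv ℝ f 0))) 0 :=
    (l.hasFDerivAt.comp 0 (hf.differentiableAt zero_mem_unitDisk).hasFDerivAt).const_sub c
  calc |l (pd i f 0)| = ‖fderiv ℝ (fun z => c - l (f z)) 0 (EuclideanSpace.single i 1)‖ := by
        rw [hderiv.fderiv, neg_apply, norm_neg]
        rfl
    _ ≤ ‖fderiv ℝ (fun z => c - l (f z)) 0‖ := by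
        refine (ContinuousLinearMap.le_opNorm _ _).trans_eq ?_
        simp
    _ ≤ 2 * (c - l (f 0)) :=
        norm_fderiv_le_two_mul_of_harmonicOnNhd_unitDisk hharm fun z hz => sub_pos.2 (hlt z hz)

end Harnack

section Rotation

variable {E : Type*} [NormedAddCommGroup E] [InnerProductSpace ℝ E]

/-- The rotation in the plane of `v` and `u` that carries the direction of `v` to that of `u`,
written as a product of two line reflections. If `u` or `v` vanishes, or they point in opposite
directions, the second line degenerates to `0` and the second factor is `-1`. -/
def rotationTo (v u : E) : E ≃ₗᵢ[ℝ] E :=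
  (Submodule.span ℝ {v}).reflection.trans (Submodule.span ℝ {‖u‖ • v + ‖v‖ • u}).reflection

theorem norm_smul_rotationTo_apply_self (v u : E) : ‖u‖ • rotationTo v u v = ‖v‖ • u := by
  have hnorm : ‖‖u‖ • v‖ = ‖-(‖v‖ • u)‖ := by
    rw [norm_neg, norm_smul, norm_smul, norm_norm, norm_norm, mul_comm]
  have h := Submodule.reflection_sub hnorm
  rw [sub_neg_eq_add, Submodule.reflection_orthogonal_apply, neg_inj] at h
  rw [rotationTo, LinearIsometryEquiv.trans_apply, Submodule.reflection_mem_subspace_eq_self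
    (Submodule.mem_span_singleton_self v), ← map_smul, h]

theorem norm_div_norm_smul_rotationTo_apply_self {v : E} (hv : v ≠ 0) (u : E) :
    (‖u‖ / ‖v‖) • rotationTo v u v = u := by
  rw [div_eq_inv_mul, mul_smul, norm_smul_rotationTo_apply_self,
    inv_smul_smul₀ (norm_ne_zero_iff.2 hv)]

theorem rotationTo_self_apply {v : E} (hv : v ≠ 0) (y : E) : rotationTo v v y = y := by
  have hspan : Submodule.span ℝ {‖v‖ • v + ‖v‖ • v} = Submodule.span ℝ {v} := by
    rw [← add_smul]
    exact Submodule.span_singleton_smul_eq (by simpa [← two_mul] using hv) v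
  simp only [rotationTo, hspan, Submodule.reflection_trans_reflection,
    LinearIsometryEquiv.coe_refl, id_eq]

theorem continuousAt_rotationTo {v : E} (hv : v ≠ 0) (y : E) :
    ContinuousAt (fun p : E × E => rotationTo v p.1 p.2) (v, y) := by
  have hv2 : ‖v‖ ^ 2 ≠ 0 := by simpa using hv
  have hline : ‖‖v‖ • v + ‖v‖ • v‖ ^ 2 ≠ 0 := by simpa [← two_smul ℝ] using hv
  simp only [rotationTo, LinearIsometryEquiv.trans_apply, Submodule.reflection_singleton_apply,
    RCLike.ofReal_real_eq_id, id_eq]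
  fun_prop (disch := first | exact hv2 | exact hline)

/-- The similarity of `E` that moves `x` to `y` and has linear part a scaling followed by
`rotationTo`, so that the tangent vector `v` at `x` goes to `u` at `y` (for `v ≠ 0`). -/
def similarityTo (x v y u p : E) : E :=
  y + (‖u‖ / ‖v‖) • rotationTo v u (p - x)

theorem similarityTo_self {v : E} (hv : v ≠ 0) (x p : E) : similarityTo x v x v p = p := by
  simp [similarityTo, rotationTo_self_apply hv, norm_ne_zero_iff.2 hv]

theorem continuousAt_similarityTo {v : E} (hv : v ≠ 0) (x p : E) :
    ContinuousAt (fun q : (E × E) × E => similarityTo x v q.1.1 q.1.2 q.2) ((x, v), p) := by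
  have hrot : ContinuousAt (fun q : (E × E) × E => rotationTo v q.1.2 (q.2 - x)) ((x, v), p) :=
    ContinuousAt.comp (f := fun q : (E × E) × E => (q.1.2, q.2 - x)) (x := ((x, v), p))
      (continuousAt_rotationTo hv (p - x)) (by fun_prop)
  unfold similarityTo
  fun_prop

end Rotation

section ConformalDisks

open scoped Topology

variable {d : ℕ} {D : Set (Euc d)} {x v w : Euc d}

/-- `D` contains a conformal harmonic disk centred at `x` with horizontal derivative `w`.
These disks are the competitors in the infimum defining `minMetric`. -/
def HasConformalDisk (D : Set (Euc d)) (x w : Euc d) : Prop :=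
  ∃ f : Euc 2 → Euc d, ConformalHarmonicOnDisk f ∧ (∀ z ∈ unitDisk, f z ∈ D) ∧
    f 0 = x ∧ pd 0 f 0 = w

theorem HasConformalDisk.mem (h : HasConformalDisk D x w) : x ∈ D := by
  obtain ⟨f, -, hfD, rfl, -⟩ := h
  exact hfD 0 zero_mem_unitDisk

theorem HasConformalDisk.abs_apply_le (h : HasConformalDisk D x w) {l : Euc d →L[ℝ] ℝ} {c : ℝ}
    (hlt : ∀ y ∈ D, l y < c) : |l w| ≤ 2 * (c - l x) := by
  obtain ⟨f, hf, hfD, rfl, rfl⟩ := h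
  exact hf.abs_apply_pd_le (fun z hz => hlt _ (hfD z hz)) 0

theorem exists_linearIsometry_apply_single_zero (hd : 2 ≤ d) {u : Euc d} (hu : ‖u‖ = 1) :
    ∃ T : Euc 2 →ₗᵢ[ℝ] Euc d, T (EuclideanSpace.single 0 1) = u := by
  let ι : Fin 2 ↪ Fin d := Fin.castLEEmb hd
  have hu' : Orthonormal ℝ (({ι 0} : Set (Fin d)).domRestrict fun _ => u) :=
    ⟨fun _ => hu, fun i j hij => absurd (Subsingleton.elim i j) hij⟩
  obtain ⟨b, hb⟩ := hu'.exists_orthonormalBasis_extension_of_card_eq (by simp)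
  let e := EuclideanSpace.basisFun (Fin 2) ℝ
  let T := e.toBasis.constr ℝ (b ∘ ι)
  have hT : T ∘ e.toBasis = b ∘ ι := funext (e.toBasis.constr_basis ℝ _)
  refine ⟨T.isometryOfOrthonormal (v := e.toBasis) (by simp)
    (hT ▸ b.orthonormal.comp ι ι.injective), ?_⟩
  have hT0 : T (EuclideanSpace.single 0 1) = u := by simpa [e, hb (ι 0) rfl] using congrFun hT 0
  exact hT0

theorem exists_linearIsometry_norm_smul_apply_single_zero (hd : 2 ≤ d) (w : Euc d) :
    ∃ T : Euc 2 →ₗᵢ[ℝ] Euc d, ‖w‖ • T (EuclideanSpace.single 0 1) = w := by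
  have : Nontrivial (Euc d) := Module.nontrivial_of_finrank_pos (R := ℝ) (by simp; omega)
  obtain ⟨u, hu, huw⟩ : ∃ u : Euc d, ‖u‖ = 1 ∧ ‖w‖ • u = w := by
    by_cases hw : w = 0
    · obtain ⟨u, hu⟩ := exists_norm_eq (Euc d) zero_le_one
      exact ⟨u, hu, by simp [hw]⟩
    · exact ⟨‖w‖⁻¹ • w, norm_smul_inv_norm hw, smul_inv_smul₀ (norm_ne_zero_iff.2 hw) w⟩
  obtain ⟨T, hT⟩ := exists_linearIsometry_apply_single_zero hd hu
  exact ⟨T, by rw [hT, huw]⟩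

theorem hasConformalDisk_of_ball_subset (hd : 2 ≤ d) {ε : ℝ} (hε : 0 < ε) (hD : ball x ε ⊆ D)
    (hw : ‖w‖ ≤ ε) : HasConformalDisk D x w := by
  obtain ⟨T, hT⟩ := exists_linearIsometry_norm_smul_apply_single_zero hd w
  refine ⟨fun z => x + ‖w‖ • T z, conformalHarmonicOnDisk_id.const_add_smul_linearIsometry T _ x,
    fun z hz => hD ?_, by simp, ?_⟩
  · rw [mem_ball, dist_self_add_left, norm_smul, norm_norm, T.norm_map]
    have hz1 : ‖z‖ < 1 := mem_ball_zero_iff.1 hz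
    nlinarith [norm_nonneg z, norm_nonneg w]
  · rw [pd_const_add_smul_linearIsometry T _ x differentiableAt_fun_id, pd, fderiv_fun_id,
      ContinuousLinearMap.id_apply, hT]

theorem ConformalHarmonicOnDisk.hasConformalDisk_similarityTo {f : Euc 2 → Euc d}
    (hf : ConformalHarmonicOnDisk f) (hw : pd 0 f 0 ≠ 0) {ρ : ℝ} (hρ0 : 0 < ρ) (hρ1 : ρ ≤ 1)
    {y u : Euc d}
    (hD : ∀ z ∈ unitDisk, similarityTo (f 0) (pd 0 f 0) y u (f (ρ • z)) ∈ D) :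
    HasConformalDisk D y (ρ • u) := by
  set w := pd 0 f 0
  let R : Euc d →ₗᵢ[ℝ] Euc d := (rotationTo w u).toLinearIsometry
  let c : ℝ := ‖u‖ / ‖w‖
  let g : Euc 2 → Euc d := fun z => y - c • R (f 0) + c • R (f (ρ • z))
  have hfρ := hf.comp_smul hρ0 hρ1
  have hg : ∀ z, g z = similarityTo (f 0) w y u (f (ρ • z)) := fun z => by
    simp only [g, c, R, similarityTo, map_sub, smul_sub, LinearIsometryEquiv.coe_toLinearIsometry]
    abel
  have hcw : c • R w = u := norm_div_norm_smul_rotationTo_apply_self hw u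
  refine ⟨g, hfρ.const_add_smul_linearIsometry R c _, fun z hz => hg z ▸ hD z hz, ?_, ?_⟩
  · simp [hg, similarityTo]
  · rw [pd_const_add_smul_linearIsometry R c _ (hfρ.differentiableAt zero_mem_unitDisk),
      pd_comp_smul, smul_zero, map_smul, smul_comm, hcw]

-- Moving the disk by a similarity close to the identity may push it out of `D`; shrinking it first
-- makes its image relatively compact in `D`.
theorem HasConformalDisk.eventually_of_ne_zero (h : HasConformalDisk D x w) (hD : IsOpen D)
    (hw : w ≠ 0) {ρ : ℝ} (hρ0 : 0 < ρ) (hρ1 : ρ < 1) :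
    ∀ᶠ p : Euc d × Euc d in 𝓝 (x, w), HasConformalDisk D p.1 (ρ • p.2) := by
  obtain ⟨f, hf, hfD, rfl, rfl⟩ := h
  have hball : closedBall 0 ρ ⊆ unitDisk := closedBall_subset_ball hρ1
  have hK : IsCompact (f '' closedBall 0 ρ) :=
    (isCompact_closedBall 0 ρ).image_of_continuousOn (hf.1.continuousOn.mono hball)
  have hKD : ∀ᶠ p : Euc d × Euc d in 𝓝 (f 0, pd 0 f 0), ∀ y ∈ f '' closedBall 0 ρ,
      similarityTo (f 0) (pd 0 f 0) p.1 p.2 y ∈ D := by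
    refine hK.eventually_forall_of_forall_eventually ?_
    rintro _ ⟨z, hz, rfl⟩
    refine (continuousAt_similarityTo hw (f 0) (f z)).eventually_mem ?_
    rw [similarityTo_self hw]
    exact hD.mem_nhds (hfD z (hball hz))
  filter_upwards [hKD] with p hp
  refine hf.hasConformalDisk_similarityTo hw hρ0 hρ1.le fun z hz =>
    hp _ (mem_image_of_mem f (mem_closedBall_zero_iff.2 ?_))
  rw [norm_smul, Real.norm_of_nonneg hρ0.le]
  exact mul_le_of_le_one_right hρ0.le (mem_ball_zero_iff.1 hz).le

theorem HasConformalDisk.eventually (hd : 2 ≤ d) (h : HasConformalDisk D x w) (hD : IsOpen D)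
    {ρ : ℝ} (hρ0 : 0 < ρ) (hρ1 : ρ < 1) :
    ∀ᶠ p : Euc d × Euc d in 𝓝 (x, w), HasConformalDisk D p.1 (ρ • p.2) := by
  by_cases hw : w = 0
  · subst hw
    obtain ⟨ε, hε, hball⟩ := Metric.isOpen_iff.1 hD x h.mem
    have hnear : ∀ᶠ p : Euc d × Euc d in 𝓝 (x, 0), dist p.1 x + ‖p.2‖ < ε / 2 :=
      ContinuousAt.eventually_lt (by fun_prop) continuousAt_const (by simpa using hε)
    filter_upwards [hnear] with p hp
    have hsmall : ‖ρ • p.2‖ ≤ ε / 2 := by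
      rw [norm_smul, Real.norm_of_nonneg hρ0.le]
      nlinarith [norm_nonneg p.2, dist_nonneg (x := p.1) (y := x)]
    refine hasConformalDisk_of_ball_subset hd (half_pos hε) ?_ hsmall
    exact (ball_subset_ball' (by linarith [norm_nonneg p.2])).trans hball
  · exact h.eventually_of_ne_zero hD hw hρ0 hρ1

end ConformalDisks

section MinimalMetric

open scoped Topology

variable {d : ℕ} {D : Set (Euc d)} {x v : Euc d}

theorem minMetric_nonneg (D : Set (Euc d)) (x v : Euc d) : 0 ≤ minMetric D x v := by
  apply Real.sInf_nonneg
  rintro _ ⟨r, hr, rfl, -⟩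
  positivity

theorem minMetric_le_one_div {r : ℝ} (hr : 0 < r) (h : HasConformalDisk D x (r • v)) :
    minMetric D x v ≤ 1 / r := by
  refine csInf_le ⟨0, ?_⟩ ⟨r, hr, rfl, h⟩
  rintro _ ⟨s, hs, rfl, -⟩
  positivity

theorem exists_pos_hasConformalDisk_smul (hd : 2 ≤ d) (hD : IsOpen D) (hx : x ∈ D) (v : Euc d) :
    ∃ r : ℝ, 0 < r ∧ HasConformalDisk D x (r • v) := by
  obtain ⟨ε, hε, hball⟩ := Metric.isOpen_iff.1 hD x hx
  have hr : 0 < ε / (‖v‖ + 1) := by positivity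
  refine ⟨_, hr, hasConformalDisk_of_ball_subset hd hε hball ?_⟩
  rw [norm_smul, Real.norm_of_nonneg hr.le, div_mul_eq_mul_div, div_le_iff₀ (by positivity)]
  linarith

theorem le_minMetric (hd : 2 ≤ d) (hD : IsOpen D) (hx : x ∈ D) {a : ℝ}
    (ha : ∀ r : ℝ, 0 < r → HasConformalDisk D x (r • v) → a ≤ 1 / r) : a ≤ minMetric D x v := by
  obtain ⟨r, hr, h⟩ := exists_pos_hasConformalDisk_smul hd hD hx v
  refine le_csInf ⟨1 / r, r, hr, rfl, h⟩ ?_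
  rintro _ ⟨s, hs, rfl, hdisk⟩
  exact ha s hs hdisk

theorem upperSemicontinuousOn_minMetric (hd : 2 ≤ d) (hD : IsOpen D) :
    UpperSemicontinuousOn (fun p : Euc d × Euc d => minMetric D p.1 p.2) (D ×ˢ univ) := by
  rintro ⟨x, v⟩ ⟨hx, -⟩ c (hc : minMetric D x v < c)
  obtain ⟨r, hr, hdisk, hrc⟩ :
      ∃ r : ℝ, 0 < r ∧ HasConformalDisk D x (r • v) ∧ 1 / r < c := by
    by_contra! hcon
    exact hc.not_ge (le_minMetric hd hD hx hcon)
  have hc0 : 0 < c := (one_div_pos.2 hr).trans hrc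
  obtain ⟨ρ, hρ, hρ1⟩ : ∃ ρ, max 0 (1 / (r * c)) < ρ ∧ ρ < 1 := by
    refine exists_between (max_lt one_pos ?_)
    rwa [div_lt_one (by positivity), ← div_lt_iff₀' hr]
  obtain ⟨hρ0, hρc⟩ := max_lt_iff.1 hρ
  have hscale : Tendsto (fun p : Euc d × Euc d => (p.1, r • p.2)) (𝓝 (x, v)) (𝓝 (x, r • v)) :=
    Continuous.tendsto (by fun_prop) _
  refine eventually_nhdsWithin_of_eventually_nhds ?_
  filter_upwards [hscale.eventually (hdisk.eventually hd hD hρ0 hρ1)] with p hp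
  rw [smul_smul] at hp
  refine (minMetric_le_one_div (mul_pos hρ0 hr) hp).trans_lt ?_
  rw [div_lt_iff₀ (by positivity)] at hρc ⊢
  linarith

theorem abs_div_le_minMetric (hd : 2 ≤ d) (hD : IsOpen D) (hx : x ∈ D) {l : Euc d →L[ℝ] ℝ}
    {c : ℝ} (hlt : ∀ y ∈ D, l y < c) (v : Euc d) :
    |l v| / (2 * (c - l x)) ≤ minMetric D x v := by
  refine le_minMetric hd hD hx fun r hr hdisk => ?_
  have h := hdisk.abs_apply_le hlt
  rw [map_smul, smul_eq_mul, abs_mul, abs_of_pos hr] at h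
  rw [div_le_div_iff₀ (by linarith [hlt x hx]) hr]
  linarith

end MinimalMetric

section Curves

open MeasureTheory

theorem integrableOn_of_upperSemicontinuousOn {X : Type*} [TopologicalSpace X] [MeasurableSpace X]
    [OpensMeasurableSpace X] {μ : Measure X} [IsFiniteMeasureOnCompacts μ] {K : Set X}
    (hK : IsCompact K) (hKmeas : MeasurableSet K) {g : X → ℝ} (hg : UpperSemicontinuousOn g K)
    (hbelow : BddBelow (g '' K)) : IntegrableOn g K μ := by
  obtain ⟨m, hm⟩ := hbelow
  obtain ⟨M, hM⟩ := hg.bddAbove_of_isCompact hK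
  have hmeas : AEMeasurable g (μ.restrict K) := aemeasurable_restrict_of_measurable_subtype hKmeas
    (upperSemicontinuousOn_iff_restrict.2 hg).measurable
  refine ⟨hmeas.aestronglyMeasurable,
    .restrict_of_bounded (C := max (-m) M) hK.measure_lt_top ?_⟩
  filter_upwards [ae_restrict_mem hKmeas] with x hx
  exact abs_le'.2 ⟨(hM (mem_image_of_mem g hx)).trans (le_max_right _ _),
    (neg_le_neg (hm (mem_image_of_mem g hx))).trans (le_max_left _ _)⟩

variable {d : ℕ} {D : Set (Euc d)} {γ : ℝ → Euc d} {a b : ℝ}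

theorem PiecewiseC1On.induction (hγ : PiecewiseC1On γ a b) {P : ℝ → ℝ → Prop}
    (piece : ∀ s t, s ≤ t → Icc s t ⊆ Icc a b → ContDiffOn ℝ 1 γ (Icc s t) → P s t)
    (trans : ∀ r s t, P r s → P s t → P r t) : P a b := by
  obtain ⟨-, n, τ, hτ, rfl, rfl, hC1⟩ := hγ
  have hpiece : ∀ i : Fin (n + 1), P (τ i.castSucc) (τ i.succ) := fun i =>
    piece _ _ (hτ i.castSucc_le_succ) (Icc_subset_Icc (hτ (Fin.zero_le _)) (hτ (Fin.le_last _)))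
      (hC1 i)
  have hinit : ∀ i : Fin (n + 1), P (τ 0) (τ i.succ) := fun i => by
    induction i using Fin.induction with
    | zero => exact hpiece 0
    | succ j ih => exact trans _ _ _ ih (hpiece j.succ)
  exact hinit (Fin.last n)

theorem intervalIntegrable_minMetric_of_contDiffOn (hd : 2 ≤ d) (hD : IsOpen D) (hab : a ≤ b)
    (hγ : ContDiffOn ℝ 1 γ (Icc a b)) (hγD : ∀ t ∈ Icc a b, γ t ∈ D) :
    IntervalIntegrable (fun t => minMetric D (γ t) (deriv γ t)) volume a b := by
  obtain rfl | hab := hab.eq_or_lt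
  · exact IntervalIntegrable.refl
  have hpair : ContinuousOn (fun t => (γ t, derivWithin γ (Icc a b) t)) (Icc a b) :=
    hγ.continuousOn.prodMk (hγ.continuousOn_derivWithin (uniqueDiffOn_Icc hab) le_rfl)
  have husc : UpperSemicontinuousOn
      (fun t => minMetric D (γ t) (derivWithin γ (Icc a b) t)) (Icc a b) :=
    (upperSemicontinuousOn_minMetric hd hD).comp hpair fun t ht => ⟨hγD t ht, trivial⟩
  have hgint := integrableOn_of_upperSemicontinuousOn (μ := volume) isCompact_Icc
    measurableSet_Icc husc ⟨0, forall_mem_image.2 fun t _ => minMetric_nonneg D _ _⟩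
  rw [intervalIntegrable_iff_integrableOn_Ioo_of_le hab.le]
  refine (hgint.mono_set Ioo_subset_Icc_self).congr_fun (fun t ht => ?_) measurableSet_Ioo
  simp only [derivWithin_of_mem_nhds (Icc_mem_nhds ht.1 ht.2)]

theorem PiecewiseC1On.intervalIntegrable_minMetric (hγ : PiecewiseC1On γ a b) (hd : 2 ≤ d)
    (hD : IsOpen D) (hγD : ∀ t ∈ Icc a b, γ t ∈ D) :
    IntervalIntegrable (fun t => minMetric D (γ t) (deriv γ t)) volume a b :=
  hγ.induction
    (fun _ _ hst hsub hC1 =>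
      intervalIntegrable_minMetric_of_contDiffOn hd hD hst hC1 fun t ht => hγD t (hsub ht))
    fun _ _ _ => IntervalIntegrable.trans

theorem PiecewiseC1On.le (hγ : PiecewiseC1On γ a b) : a ≤ b :=
  hγ.induction (fun _ _ hst _ _ => hst) fun _ _ _ => le_trans

theorem PiecewiseC1On.norm_sub_le_integral (hγ : PiecewiseC1On γ a b) {F : Type*}
    [NormedAddCommGroup F] [NormedSpace ℝ F] {φ : Euc d → F} {g : ℝ → ℝ}
    (hφ : ∀ t ∈ Icc a b, DifferentiableAt ℝ φ (γ t)) (hg : IntervalIntegrable g volume a b)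
    (hle : ∀ t ∈ Icc a b, ‖fderiv ℝ φ (γ t) (deriv γ t)‖ ≤ g t) :
    ‖φ (γ b) - φ (γ a)‖ ≤ ∫ t in a..b, g t := by
  have hab := hγ.le
  refine (hγ.induction (P := fun s t => IntervalIntegrable g volume s t ∧
    ‖φ (γ t) - φ (γ s)‖ ≤ ∫ τ in s..t, g τ) ?_ ?_).2
  · intro s t hst hsub hC1
    have hgst : IntervalIntegrable g volume s t :=
      hg.mono_set (by rwa [uIcc_of_le hst, uIcc_of_le hab])
    have hderiv : ∀ τ ∈ Ioo s t,
        HasDerivAt (φ ∘ γ) (fderiv ℝ φ (γ τ) (deriv γ τ)) τ := fun τ hτ =>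
      (hφ τ (hsub (Ioo_subset_Icc_self hτ))).hasFDerivAt.comp_hasDerivAt τ
        ((hC1.contDiffAt (Icc_mem_nhds hτ.1 hτ.2)).differentiableAt one_ne_zero).hasDerivAt
    refine ⟨hgst, norm_sub_le_integral_of_norm_deriv_le_of_le (f := φ ∘ γ) hst ?_ ?_ ?_ hgst⟩
    · exact fun τ hτ => (hφ τ (hsub hτ)).continuousAt.comp_continuousWithinAt
        (hC1.continuousOn τ hτ)
    · exact fun τ hτ => (hderiv τ hτ).differentiableAt.differentiableWithinAt
    · filter_upwards with τ hτ
      rw [(hderiv τ hτ).deriv]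
      exact hle τ (hsub (Ioo_subset_Icc_self hτ))
  · rintro r s t ⟨hg₁, h₁⟩ ⟨hg₂, h₂⟩
    refine ⟨hg₁.trans hg₂, ?_⟩
    rw [← intervalIntegral.integral_add_adjacent_intervals hg₁ hg₂, add_comm]
    exact (norm_sub_le_norm_sub_add_norm_sub _ _ _).trans (add_le_add h₂ h₁)

theorem PiecewiseC1On.half_mul_abs_log_div_le_integral_minMetric (hγ : PiecewiseC1On γ a b)
    (hd : 2 ≤ d) (hD : IsOpen D) (hγD : ∀ t ∈ Icc a b, γ t ∈ D) {l : Euc d →L[ℝ] ℝ} {c : ℝ}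
    (hlt : ∀ y ∈ D, l y < c) :
    (1 / 2) * |Real.log ((c - l (γ a)) / (c - l (γ b)))| ≤
      ∫ t in a..b, minMetric D (γ t) (deriv γ t) := by
  let φ : Euc d → ℝ := fun y => (1 / 2) * Real.log (c - l y)
  have hφ : ∀ y ∈ D, HasFDerivAt φ ((1 / 2 : ℝ) • (c - l y)⁻¹ • -l) y := fun y hy =>
    ((l.hasFDerivAt.const_sub c).log (sub_pos.2 (hlt y hy)).ne').const_mul _
  have hhalf : |(1 / 2 : ℝ)| = 1 / 2 := abs_of_pos one_half_pos
  have hincr : (1 / 2) * |Real.log ((c - l (γ a)) / (c - l (γ b)))| = ‖φ (γ b) - φ (γ a)‖ := by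
    have hne : ∀ t ∈ Icc a b, c - l (γ t) ≠ 0 := fun t ht => (sub_pos.2 (hlt _ (hγD t ht))).ne'
    rw [Real.log_div (hne a (left_mem_Icc.2 hγ.le)) (hne b (right_mem_Icc.2 hγ.le)), norm_sub_rev,
      Real.norm_eq_abs, ← mul_sub, abs_mul, hhalf]
  rw [hincr]
  refine hγ.norm_sub_le_integral (fun t ht => (hφ _ (hγD t ht)).differentiableAt)
    (hγ.intervalIntegrable_minMetric hd hD hγD) fun t ht => ?_
  refine le_trans (le_of_eq ?_) (abs_div_le_minMetric hd hD (hγD t ht) hlt (deriv γ t))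
  have hpos : 0 < c - l (γ t) := sub_pos.2 (hlt _ (hγD t ht))
  rw [(hφ _ (hγD t ht)).fderiv]
  simp only [smul_apply, neg_apply, norm_smul, norm_neg, norm_inv, Real.norm_eq_abs,
    abs_of_pos hpos, hhalf]
  field_simp

end Curves

section MinimalDistance

variable {d : ℕ} {D : Set (Euc d)} {p q : Euc d}

theorem piecewiseC1On_of_contDiff {γ : ℝ → Euc d} (hγ : ContDiff ℝ 1 γ) {a b : ℝ} (hab : a ≤ b) :
    PiecewiseC1On γ a b := by
  refine ⟨hγ.continuous.continuousOn, 0, ![a, b], ?_, rfl, rfl, fun _ => hγ.contDiffOn⟩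
  rw [Fin.monotone_iff_le_succ]
  simpa using hab

theorem le_minDist (hConv : Convex ℝ D) (hp : p ∈ D) (hq : q ∈ D) {L : ℝ}
    (hL : ∀ γ : ℝ → Euc d, PiecewiseC1On γ 0 1 → (∀ t ∈ Icc (0 : ℝ) 1, γ t ∈ D) → γ 0 = p →
      γ 1 = q → L ≤ ∫ t in (0 : ℝ)..1, minMetric D (γ t) (deriv γ t)) : L ≤ minDist D p q := by
  refine le_csInf ⟨_, fun t => p + t • (q - p), ?_, ?_, by simp, by simp, rfl⟩ ?_
  · exact piecewiseC1On_of_contDiff (by fun_prop) zero_le_one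
  · exact fun t ht => hConv.add_smul_sub_mem hp hq ht
  · rintro _ ⟨γ, hγ, hγD, hγp, hγq, rfl⟩
    exact hL γ hγ hγD hγp hγq

theorem norm_sub_div_norm_sub_eq_of_collinear {E : Type*} [NormedAddCommGroup E] [NormedSpace ℝ E]
    (l : E →ₗ[ℝ] ℝ) {p q ξ : E} (hline : ∃ t : ℝ, ξ = p + t • (q - p)) (hp : l p < l ξ)
    (hq : l q < l ξ) : ‖ξ - p‖ / ‖ξ - q‖ = (l ξ - l p) / (l ξ - l q) := by
  obtain ⟨t, ht⟩ := hline
  have hξp : ξ - p = t • (q - p) := by rw [ht, add_sub_cancel_left]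
  have hξq : ξ - q = (t - 1) • (q - p) := by rw [sub_smul, one_smul, ← hξp]; abel
  have hlp : l ξ - l p = t * l (q - p) := by rw [← map_sub, hξp, map_smul, smul_eq_mul]
  have hlq : l ξ - l q = (t - 1) * l (q - p) := by rw [← map_sub, hξq, map_smul, smul_eq_mul]
  have hl : l (q - p) ≠ 0 := right_ne_zero_of_mul (hlp ▸ (sub_pos.2 hp).ne')
  have hqp : ‖q - p‖ ≠ 0 := fun h => hl (by rw [norm_eq_zero.1 h, map_zero])
  rw [← abs_of_pos (div_pos (sub_pos.2 hp) (sub_pos.2 hq)), hξp, hξq, hlp, hlq, norm_smul,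
    norm_smul, mul_div_mul_right _ _ hqp, mul_div_mul_right _ _ hl, abs_div, Real.norm_eq_abs,
    Real.norm_eq_abs]

theorem minimal_distance_convex_lower_bound_general (hd : 2 ≤ d) (hOpen : IsOpen D)
    (hConv : Convex ℝ D) (hp : p ∈ D) (hq : q ∈ D) {ξ : Euc d}
    (hline : ∃ t : ℝ, ξ = p + t • (q - p)) (hξ : ξ ∉ D) :
    (1 / 2) * |Real.log (‖ξ - p‖ / ‖ξ - q‖)| ≤ minDist D p q := by
  obtain ⟨l, hl⟩ := geometric_hahn_banach_open_point hConv hOpen hξ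
  have hratio : ‖ξ - p‖ / ‖ξ - q‖ = (l ξ - l p) / (l ξ - l q) :=
    norm_sub_div_norm_sub_eq_of_collinear l.toLinearMap hline (hl p hp) (hl q hq)
  rw [hratio]
  refine le_minDist hConv hp hq fun γ hγ hγD hγp hγq => ?_
  rw [← hγp, ← hγq]
  exact hγ.half_mul_abs_log_div_le_integral_minMetric hd hOpen hγD hl

end MinimalDistance

/-- Lower bound for the minimal distance in a hyperbolic convex domain:
if `ξ` lies on the line through `p, q ∈ D` and `ξ ∉ D`, then
`(1/2)|log(‖ξ-p‖/‖ξ-q‖)| ≤ ρ_D(p,q)`. -/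
theorem minimal_distance_convex_lower_bound
    (d : ℕ) (hd : 3 ≤ d) (D : Set (Euc d))
    (hOpen : IsOpen D) (hConn : IsConnected D) (hConv : Convex ℝ D)
    (hHyp : MinHyperbolic D)
    (p q : Euc d) (hp : p ∈ D) (hq : q ∈ D) (hpq : p ≠ q)
    (ξ : Euc d) (hline : ∃ t : ℝ, ξ = p + t • (q - p)) (hξ : ξ ∉ D) :
    (1/2) * |Real.log (‖ξ - p‖ / ‖ξ - q‖)| ≤ minDist D p q :=
  minimal_distance_convex_lower_bound_general (by lia) hOpen hConv hp hq hline hξ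
end
end

section
/- Let d ≥ 3, let D ⊂ ℝ^d be a domain, let x ∈ D and let v ∈ ℝ^d be nonzero. Then g_D(x,v) ≤ ‖v‖/δ̂_D(x,v), where for a 2-dimensional linear subspace Λ ⊂ ℝ^d, δ_D(x,Λ) := inf{‖x−y‖ : y ∈ (x+Λ)∖D} and δ̂_D(x,v) := sup{δ_D(x,Λ) : Λ a 2-dimensional linear subspace of ℝ^d with v ∈ Λ}. -/
/-!
The bound is realised by flat disks. If a 2-plane `Λ` contains `v` and `0 < R < δ_D(x, Λ)`, let
`L : ℝ² → Λ` be a linear isometry with `L e₀ = v / ‖v‖`. The affine map `z ↦ x + R • L z` is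
conformal and harmonic, sends the unit disk into the disk of radius `R` about `x` in `x + Λ`, which
lies in `D`, and has `f_x(0) = (R / ‖v‖) v`; hence `g_D(x, v) ≤ ‖v‖ / R`. Let `R` increase to
`δ_D(x, Λ)` and take the supremum over `Λ`.
-/

open scoped RealInnerProductSpace ENNReal
open Metric Set Filter

noncomputable section

lemma ennreal_le_div_comm {a b c : ℝ≥0∞} (hb_zero : b ≠ 0) (hb_top : b ≠ ∞) :
    a ≤ b / c ↔ c ≤ b / a := by
  rw [ENNReal.le_div_iff_mul_le (.inr hb_zero) (.inr hb_top), mul_comm,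
    ENNReal.le_div_iff_mul_le (.inr hb_zero) (.inr hb_top)]

lemma exists_linearIsometry_single_eq_of_mem {𝕜 E ι : Type*} [RCLike 𝕜] [NormedAddCommGroup E]
    [InnerProductSpace 𝕜 E] [Fintype ι] [DecidableEq ι] {Λ : Submodule 𝕜 E}
    (hΛ : Module.finrank 𝕜 Λ = Fintype.card ι) (i : ι) {u : E} (hu : u ∈ Λ) (hu_norm : ‖u‖ = 1) :
    ∃ L : EuclideanSpace 𝕜 ι →ₗᵢ[𝕜] E, L (EuclideanSpace.single i 1) = u ∧ ∀ z, L z ∈ Λ := by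
  have : Nonempty ι := ⟨i⟩
  have : FiniteDimensional 𝕜 Λ := .of_finrank_pos (hΛ ▸ Fintype.card_pos)
  have h_orthonormal : Orthonormal 𝕜 (({i} : Set ι).domRestrict fun _ ↦ (⟨u, hu⟩ : Λ)) :=
    orthonormal_subsingleton_iff.mpr fun _ ↦ hu_norm
  obtain ⟨b, hb⟩ := h_orthonormal.exists_orthonormalBasis_extension_of_card_eq hΛ
  refine ⟨Λ.subtypeₗᵢ.comp b.repr.symm.toLinearIsometry, ?_, fun z ↦ (b.repr.symm z).2⟩
  simp [hb i rfl]

lemma pd_const_add {d : ℕ} (i : Fin 2) (x : Euc d) (L : Euc 2 →L[ℝ] Euc d) :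
    pd i (fun z ↦ x + L z) = fun _ ↦ L (EuclideanSpace.single i 1) := by
  funext z
  rw [pd, fderiv_const_add, L.fderiv]

lemma conformalHarmonicOnDisk_const_add {d : ℕ} (x : Euc d) (L : Euc 2 →L[ℝ] Euc d)
    (h_norm : ‖L (EuclideanSpace.single 0 1)‖ = ‖L (EuclideanSpace.single 1 1)‖)
    (h_inner : ⟪L (EuclideanSpace.single 0 1), L (EuclideanSpace.single 1 1)⟫ = 0) :
    ConformalHarmonicOnDisk fun z ↦ x + L z := by
  refine ⟨(contDiff_const.add L.contDiff).contDiffOn, fun z _ ↦ ?_, fun z _ ↦ ?_⟩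
  · simp [pd_const_add]
  · simpa only [pd_const_add] using ⟨h_norm, h_inner⟩

lemma conformalHarmonicOnDisk_const_add_smul_linearIsometry {d : ℕ} (x : Euc d) (c : ℝ)
    (L : Euc 2 →ₗᵢ[ℝ] Euc d) :
    ConformalHarmonicOnDisk fun z ↦ x + (c • L.toContinuousLinearMap) z := by
  apply conformalHarmonicOnDisk_const_add
  · simp [norm_smul]
  · simp [inner_smul_left, inner_smul_right, EuclideanSpace.inner_single_left]

section MinMetric

variable {d : ℕ} {D : Set (Euc d)} {x v : Euc d}

lemma minMetric_le_one_div_s14 {r : ℝ} (hr : 0 < r) {f : Euc 2 → Euc d}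
    (hf : ConformalHarmonicOnDisk f) (hfD : MapsTo f unitDisk D) (hf_zero : f 0 = x)
    (hf_pd : pd 0 f 0 = r • v) : minMetric D x v ≤ 1 / r := by
  refine csInf_le ⟨0, ?_⟩ ⟨r, hr, rfl, f, hf, hfD, hf_zero, hf_pd⟩
  rintro _ ⟨s, hs, rfl, -⟩
  positivity

lemma minMetric_le_norm_div_of_disk_subset (hv : v ≠ 0) {Λ : Submodule ℝ (Euc d)}
    (hΛ : Module.finrank ℝ Λ = 2) (hvΛ : v ∈ Λ) {R : ℝ} (hR : 0 < R)
    (hD : ∀ u ∈ Λ, ‖u‖ < R → x + u ∈ D) : minMetric D x v ≤ ‖v‖ / R := by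
  obtain ⟨L, hL_single, hL_mem⟩ :=
    exists_linearIsometry_single_eq_of_mem (ι := Fin 2) (by simpa using hΛ) 0
      (Λ.smul_mem ‖v‖⁻¹ hvΛ) (norm_smul_inv_norm (𝕜 := ℝ) hv)
  rw [← one_div_div]
  refine minMetric_le_one_div_s14 (by positivity)
    (conformalHarmonicOnDisk_const_add_smul_linearIsometry x R L) (fun z hz ↦ ?_) (by simp) ?_
  · have hz_norm : ‖z‖ < 1 := mem_ball_zero_iff.mp hz
    refine hD _ (Λ.smul_mem R (hL_mem z)) ?_
    simpa [norm_smul, abs_of_pos hR] using mul_lt_of_lt_one_right hR hz_norm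
  · rw [pd_const_add]
    simp [hL_single, smul_smul, div_eq_mul_inv]

/-- The distance `δ_D(x, Λ)` from `x` to the part of the affine subspace `x + Λ` outside `D`. It
takes values in `ℝ≥0∞` so that it is `∞` exactly when `x + Λ ⊆ D`. -/
def sliceDist (D : Set (Euc d)) (x : Euc d) (Λ : Submodule ℝ (Euc d)) : ℝ≥0∞ :=
  ⨅ (y : Euc d) (_ : y - x ∈ Λ ∧ y ∉ D), edist x y

lemma deltaHat_le_iff {c : ℝ≥0∞} : deltaHat D x v ≤ c ↔
    ∀ Λ : Submodule ℝ (Euc d), Module.finrank ℝ Λ = 2 → v ∈ Λ → sliceDist D x Λ ≤ c := by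
  simp only [deltaHat, sliceDist, iSup_le_iff]

lemma add_mem_of_enorm_lt_sliceDist {Λ : Submodule ℝ (Euc d)} {u : Euc d} (hu : u ∈ Λ)
    (h_lt : ‖u‖ₑ < sliceDist D x Λ) : x + u ∈ D := by
  by_contra h_notMem
  have h_le : sliceDist D x Λ ≤ edist x (x + u) := iInf₂_le (x + u) ⟨by simpa using hu, h_notMem⟩
  rw [edist_comm, edist_eq_enorm_sub, add_sub_cancel_left] at h_le
  exact h_lt.not_ge h_le

lemma ofReal_minMetric_le_norm_div_sliceDist (hv : v ≠ 0) {Λ : Submodule ℝ (Euc d)}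
    (hΛ : Module.finrank ℝ Λ = 2) (hvΛ : v ∈ Λ) :
    ENNReal.ofReal (minMetric D x v) ≤ ENNReal.ofReal ‖v‖ / sliceDist D x Λ := by
  have hv_norm : ENNReal.ofReal ‖v‖ ≠ 0 := by simpa using hv
  rw [ennreal_le_div_comm hv_norm ENNReal.ofReal_ne_top]
  refine ENNReal.le_of_forall_nnreal_lt fun R hR ↦ ?_
  rw [ennreal_le_div_comm hv_norm ENNReal.ofReal_ne_top]
  obtain rfl | hR_pos := eq_zero_or_pos R
  · rw [ENNReal.coe_zero, ENNReal.div_zero hv_norm]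
    exact le_top
  have h_disk : ∀ u ∈ Λ, ‖u‖ < R → x + u ∈ D := fun u hu huR ↦
    add_mem_of_enorm_lt_sliceDist hu (lt_trans (by exact_mod_cast huR) hR)
  calc ENNReal.ofReal (minMetric D x v)
      ≤ ENNReal.ofReal (‖v‖ / R) :=
        ENNReal.ofReal_le_ofReal (minMetric_le_norm_div_of_disk_subset hv hΛ hvΛ hR_pos h_disk)
    _ = ENNReal.ofReal ‖v‖ / R := by
        rw [ENNReal.ofReal_div_of_pos (by exact_mod_cast hR_pos), ENNReal.ofReal_coe_nnreal]

theorem minimal_metric_le_norm_div_deltaHat_general (hv : v ≠ 0) :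
    ENNReal.ofReal (minMetric D x v) ≤ ENNReal.ofReal ‖v‖ / deltaHat D x v := by
  have hv_norm : ENNReal.ofReal ‖v‖ ≠ 0 := by simpa using hv
  rw [ennreal_le_div_comm hv_norm ENNReal.ofReal_ne_top, deltaHat_le_iff]
  intro Λ hΛ hvΛ
  rw [ennreal_le_div_comm hv_norm ENNReal.ofReal_ne_top]
  exact ofReal_minMetric_le_norm_div_sliceDist hv hΛ hvΛ

end MinMetric

/-- Upper bound for the minimal metric of a domain `D ⊆ ℝ^d` (`d ≥ 3`):
`g_D(x,v) ≤ ‖v‖/δ̂_D(x,v)` (stated in `ℝ≥0∞` so that `δ̂_D(x,v) = ∞` forces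
`g_D(x,v) = 0`, as per the convention). -/
theorem minimal_metric_le_norm_div_deltaHat
    (d : ℕ) (hd : 3 ≤ d) (D : Set (Euc d)) (hOpen : IsOpen D) (hConn : IsConnected D)
    (x : Euc d) (hx : x ∈ D) (v : Euc d) (hv : v ≠ 0) :
    ENNReal.ofReal (minMetric D x v) ≤ ENNReal.ofReal ‖v‖ / deltaHat D x v :=
  minimal_metric_le_norm_div_deltaHat_general hv
end
end
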